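/- Let Y_0, Y_1, Y_2 be jointly Gaussian random vectors with mean zero, where Y_1 and Y_2 take values in ℝ^d and Y_0 takes values in ℝ^p, and suppose Cov(Y_1) is invertible. If Y_2 is conditionally independent of Y_0 given Y_1, and Cov(Y_2, Y_1) = P·Cov(Y_1, Y_1) for some d×d real matrix P, then Cov(Y_2, Y_0) = P·Cov(Y_1, Y_0). -/

import Mathlib

open MeasureTheory ProbabilityTheory

/-- The cross-covariance matrix of two random vectors: entry `(i, j)` is
`E[Xᵢ Yⱼ] − E[Xᵢ] E[Yⱼ]`. -/
noncomputable def covM {Ω : Type*} [MeasurableSpace Ω] (μ : Measure Ω)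
    {ι κ : Type*} (X : Ω → ι → ℝ) (Y : Ω → κ → ℝ) : Matrix ι κ ℝ :=
  Matrix.of fun i j =>
    (∫ ω, X ω i * Y ω j ∂μ) - (∫ ω, X ω i ∂μ) * (∫ ω, Y ω j ∂μ)

/-- A random vector (indexed by a finite type) is (jointly) Gaussian if every linear
combination of its components has a Gaussian distribution on `ℝ`. -/
def IsGaussianVec {Ω : Type*} [MeasurableSpace Ω] (μ : Measure Ω)
    {ι : Type*} [Fintype ι] (X : Ω → ι → ℝ) : Prop :=
  ∀ u : ι → ℝ, ∃ (a : ℝ) (s : NNReal),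
    Measure.map (fun ω => ∑ i, u i * X ω i) μ = gaussianReal a s

/-!
Write `X, Y, Z` for `Y₂, Y₁, Y₀`. Since `X - P Y` and `Y` are jointly Gaussian and uncorrelated,
they are independent, so `E[X | Y] = P Y + c` for a constant `c`. Conditional independence of `X`
and `Z` given `Y` makes `Cov(X, Z) = Cov(E[X | Y], Z)`, which is therefore `P Cov(Y, Z)`.
-/

section CrossCovariance

variable {Ω ι κ τ : Type*} [MeasurableSpace Ω] {μ : Measure Ω}

lemma covM_apply_eq_covariance [IsProbabilityMeasure μ] {X : Ω → ι → ℝ} {Y : Ω → κ → ℝ}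
    {i : ι} {j : κ} (hX : MemLp (fun ω => X ω i) 2 μ) (hY : MemLp (fun ω => Y ω j) 2 μ) :
    covM μ X Y i j = cov[fun ω => X ω i, fun ω => Y ω j; μ] :=
  (covariance_eq_sub hX hY).symm

lemma memLp_mulVec_apply [Fintype κ] {Y : Ω → κ → ℝ} {q : ENNReal}
    (hY : ∀ k, MemLp (fun ω => Y ω k) q μ) (P : Matrix ι κ ℝ) (i : ι) :
    MemLp (fun ω => P.mulVec (Y ω) i) q μ :=
  memLp_finsetSum _ fun k _ => (hY k).const_mul (P i k)

lemma covM_sub_left [IsProbabilityMeasure μ] {X X' : Ω → ι → ℝ} {Y : Ω → κ → ℝ}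
    (hX : ∀ i, MemLp (fun ω => X ω i) 2 μ) (hX' : ∀ i, MemLp (fun ω => X' ω i) 2 μ)
    (hY : ∀ j, MemLp (fun ω => Y ω j) 2 μ) :
    covM μ (fun ω => X ω - X' ω) Y = covM μ X Y - covM μ X' Y := by
  ext i j
  have hdiff : MemLp (fun ω => (X ω - X' ω) i) 2 μ := (hX i).sub (hX' i)
  rw [Matrix.sub_apply, covM_apply_eq_covariance hdiff (hY j),
    covM_apply_eq_covariance (hX i) (hY j), covM_apply_eq_covariance (hX' i) (hY j)]
  exact covariance_fun_sub_left (hX i) (hX' i) (hY j)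

lemma covM_mulVec_left [IsProbabilityMeasure μ] [Fintype κ] {Y : Ω → κ → ℝ} {Z : Ω → τ → ℝ}
    (hY : ∀ k, MemLp (fun ω => Y ω k) 2 μ) (hZ : ∀ j, MemLp (fun ω => Z ω j) 2 μ)
    (P : Matrix ι κ ℝ) :
    covM μ (fun ω => P.mulVec (Y ω)) Z = P * covM μ Y Z := by
  ext i j
  rw [covM_apply_eq_covariance (memLp_mulVec_apply hY P i) (hZ j), Matrix.mul_apply]
  simp only [Matrix.mulVec, dotProduct, covM_apply_eq_covariance (hY _) (hZ j),
    ← covariance_const_mul_left]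
  exact covariance_fun_sum_left (fun k => (hY k).const_mul (P i k)) (hZ j)

end CrossCovariance

section ConditionalExpectation

lemma condExp_comap_ae_eq_of_indepFun_sub {Ω β E : Type*} [MeasurableSpace Ω] [MeasurableSpace β]
    [NormedAddCommGroup E] [NormedSpace ℝ E] [CompleteSpace E] [MeasurableSpace E] [BorelSpace E]
    [SecondCountableTopology E] {μ : Measure Ω} [IsFiniteMeasure μ] {X : Ω → E} {Y : Ω → β}
    {g : β → E} (hXm : Measurable X) (hYm : Measurable Y) (hg : Measurable g)
    (hX : Integrable X μ) (hgY : Integrable (fun ω => g (Y ω)) μ)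
    (hind : IndepFun (fun ω => X ω - g (Y ω)) Y μ) :
    μ[X | MeasurableSpace.comap Y inferInstance]
      =ᵐ[μ] fun ω => g (Y ω) + ∫ ω', (X ω' - g (Y ω')) ∂μ := by
  have hresidual : μ[fun ω => X ω - g (Y ω) | MeasurableSpace.comap Y inferInstance]
      =ᵐ[μ] fun _ => ∫ ω', (X ω' - g (Y ω')) ∂μ :=
    condExp_indep_eq (hXm.sub (hg.comp hYm)).comap_le hYm.comap_le
      (comap_measurable _).stronglyMeasurable hind
  have hknown : μ[fun ω => g (Y ω) | MeasurableSpace.comap Y inferInstance]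
      = fun ω => g (Y ω) :=
    condExp_of_stronglyMeasurable hYm.comap_le
      (hg.comp (comap_measurable Y)).stronglyMeasurable hgY
  filter_upwards [hresidual, condExp_sub hX hgY (MeasurableSpace.comap Y inferInstance)]
    with ω hω hsub
  rw [← hω]
  refine eq_add_of_sub_eq' (Eq.trans ?_ hsub.symm)
  rw [Pi.sub_apply, hknown]

variable {Ω : Type*} {m' mΩ : MeasurableSpace Ω} [StandardBorelSpace Ω] {hm' : m' ≤ mΩ}
  {μ : Measure Ω} {X Y Z : Ω → ℝ}

lemma condExp_mul_of_condIndepFun [IsFiniteMeasure μ] (h : CondIndepFun m' hm' X Y μ)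
    (hXm : Measurable X) (hYm : Measurable Y) (hX : Integrable X μ) (hY : Integrable Y μ)
    (hXY : Integrable (X * Y) μ) :
    μ[X * Y | m'] =ᵐ[μ] μ[X | m'] * μ[Y | m'] := by
  have hprod := ae_of_ae_trim hm' ((condIndepFun_iff_map_prod_eq_prod_map_map hXm hYm).1 h)
  filter_upwards [hprod, condExp_ae_eq_integral_condExpKernel hm' hXY,
    condExp_ae_eq_integral_condExpKernel hm' hX,
    condExp_ae_eq_integral_condExpKernel hm' hY] with ω hω hXYω hXω hYω
  have hind : IndepFun X Y (condExpKernel μ m' ω) := by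
    rw [indepFun_iff_map_prod_eq_prod_map_map hXm.aemeasurable hYm.aemeasurable]
    rwa [Kernel.map_apply _ (hXm.prodMk hYm), Kernel.prod_apply, Kernel.map_apply _ hXm,
      Kernel.map_apply _ hYm] at hω
  rw [Pi.mul_apply, hXYω, hXω, hYω]
  exact hind.integral_mul_eq_mul_integral hXm.aestronglyMeasurable hYm.aestronglyMeasurable

lemma integral_condExp_mul_of_condIndepFun [IsFiniteMeasure μ] (h : CondIndepFun m' hm' X Y μ)
    (hXm : Measurable X) (hYm : Measurable Y) (hX : MemLp X 2 μ) (hY : MemLp Y 2 μ) :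
    ∫ ω, (μ[X | m'] * Y) ω ∂μ = ∫ ω, (X * Y) ω ∂μ := by
  have hYi := hY.integrable one_le_two
  have hcond : μ[μ[X | m'] * Y | m'] =ᵐ[μ] μ[X * Y | m'] := calc
    μ[μ[X | m'] * Y | m'] =ᵐ[μ] μ[X | m'] * μ[Y | m'] :=
      condExp_mul_of_stronglyMeasurable_left stronglyMeasurable_condExp
        ((hX.condExp one_le_two).integrable_mul hY) hYi
    _ =ᵐ[μ] μ[X * Y | m'] :=
      (condExp_mul_of_condIndepFun h hXm hYm (hX.integrable one_le_two) hYi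
        (hX.integrable_mul hY)).symm
  rw [← integral_condExp hm', integral_congr_ae hcond, integral_condExp hm']

lemma covariance_eq_of_condIndepFun_of_condExp_ae_eq [IsProbabilityMeasure μ]
    (h : CondIndepFun m' hm' X Y μ) (hXm : Measurable X) (hYm : Measurable Y)
    (hX : MemLp X 2 μ) (hY : MemLp Y 2 μ) (hXZ : μ[X | m'] =ᵐ[μ] Z) :
    cov[X, Y; μ] = cov[Z, Y; μ] := by
  have hZ : MemLp Z 2 μ := (hX.condExp one_le_two).ae_eq hXZ
  have hmean : ∫ ω, X ω ∂μ = ∫ ω, Z ω ∂μ :=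
    (integral_condExp hm').symm.trans (integral_congr_ae hXZ)
  have hprod : ∫ ω, (X * Y) ω ∂μ = ∫ ω, (Z * Y) ω ∂μ :=
    (integral_condExp_mul_of_condIndepFun h hXm hYm hX hY).symm.trans
      (integral_congr_ae (hXZ.mul .rfl))
  rw [covariance_eq_sub hX hY, covariance_eq_sub hZ hY, hmean, hprod]

end ConditionalExpectation

section Gaussian

variable {Ω ι κ τ : Type*} [MeasurableSpace Ω] {μ : Measure Ω}

lemma IsGaussianVec.aemeasurable [Fintype ι] {X : Ω → ι → ℝ} (h : IsGaussianVec μ X) :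
    AEMeasurable X μ := by
  classical
  refine aemeasurable_pi_iff.2 fun i => ?_
  obtain ⟨a, s, hmap⟩ := h (Pi.single i 1)
  simp only [Pi.single_apply, ite_mul, one_mul, zero_mul, Finset.sum_ite_eq', Finset.mem_univ,
    if_true] at hmap
  exact AEMeasurable.of_map_ne_zero (hmap ▸ IsProbabilityMeasure.ne_zero _)

lemma IsGaussianVec.hasGaussianLaw [Fintype ι] {X : Ω → ι → ℝ} (h : IsGaussianVec μ X) :
    HasGaussianLaw X μ where
  isGaussian_map := isGaussian_of_map_eq_gaussianReal fun L => by
    classical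
    obtain ⟨a, s, hmap⟩ := h fun i => L fun j => if i = j then 1 else 0
    refine ⟨a, s, ?_⟩
    rw [AEMeasurable.map_map_of_aemeasurable (by fun_prop) h.aemeasurable, ← hmap]
    congr 1
    ext ω
    exact (L.toLinearMap.pi_apply_eq_sum_univ (X ω)).trans
      (Finset.sum_congr rfl fun i _ => mul_comm _ _)

lemma memLp_two_apply_of_hasGaussianLaw [Finite ι] {X : Ω → ι → ℝ} (h : HasGaussianLaw X μ)
    (i : ι) : MemLp (fun ω => X ω i) 2 μ :=
  (h.eval (X := fun i ω => X ω i) i).memLp_two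

lemma hasGaussianLaw_prodMk_comp [Finite ι] [Finite κ] [Finite τ] {X : Ω → ι → ℝ}
    (h : HasGaussianLaw X μ) (e : κ → ι) (f : τ → ι) :
    HasGaussianLaw (fun ω => (X ω ∘ e, X ω ∘ f)) μ := by
  have := Fintype.ofFinite ι
  have := Fintype.ofFinite κ
  have := Fintype.ofFinite τ
  exact h.map_fun ((ContinuousLinearMap.pi fun k => .proj (e k)).prod
    (ContinuousLinearMap.pi fun j => .proj (f j)))

variable {X : Ω → ι → ℝ} {Y : Ω → κ → ℝ}

lemma indepFun_of_hasGaussianLaw_of_covM_eq_zero [Finite ι] [Finite κ]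
    (h : HasGaussianLaw (fun ω => (X ω, Y ω)) μ) (hcov : covM μ X Y = 0) : IndepFun X Y μ := by
  have := Fintype.ofFinite ι
  have := Fintype.ofFinite κ
  have := h.isProbabilityMeasure
  refine h.indepFun_of_covariance_eval (X := fun i ω => X ω i) (Y := fun k ω => Y ω k)
    fun i k => ?_
  rw [← covM_apply_eq_covariance (memLp_two_apply_of_hasGaussianLaw h.fst i)
    (memLp_two_apply_of_hasGaussianLaw h.snd k), hcov, Matrix.zero_apply]

lemma hasGaussianLaw_sub_mulVec_prodMk [Finite ι] [Fintype κ]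
    (h : HasGaussianLaw (fun ω => (X ω, Y ω)) μ) (P : Matrix ι κ ℝ) :
    HasGaussianLaw (fun ω => (X ω - P.mulVec (Y ω), Y ω)) μ := by
  have := Fintype.ofFinite ι
  exact h.map_fun (((ContinuousLinearMap.fst ℝ _ _) -
    (Matrix.mulVecLin P).toContinuousLinearMap.comp (ContinuousLinearMap.snd ℝ _ _)).prod
      (ContinuousLinearMap.snd ℝ _ _))

lemma indepFun_sub_mulVec_of_hasGaussianLaw [Finite ι] [Fintype κ]
    (h : HasGaussianLaw (fun ω => (X ω, Y ω)) μ) {P : Matrix ι κ ℝ}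
    (hcov : covM μ X Y = P * covM μ Y Y) :
    IndepFun (fun ω => X ω - P.mulVec (Y ω)) Y μ := by
  have := Fintype.ofFinite ι
  have := h.isProbabilityMeasure
  have hX i : MemLp (fun ω => X ω i) 2 μ := memLp_two_apply_of_hasGaussianLaw h.fst i
  have hY k : MemLp (fun ω => Y ω k) 2 μ := memLp_two_apply_of_hasGaussianLaw h.snd k
  apply indepFun_of_hasGaussianLaw_of_covM_eq_zero (hasGaussianLaw_sub_mulVec_prodMk h P)
  rw [covM_sub_left hX (memLp_mulVec_apply hY P) hY, covM_mulVec_left hY hY, hcov, sub_self]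

lemma exists_condExp_ae_eq_mulVec_add_const_of_hasGaussianLaw [Finite ι] [Fintype κ]
    (h : HasGaussianLaw (fun ω => (X ω, Y ω)) μ) (hXm : Measurable X) (hYm : Measurable Y)
    {P : Matrix ι κ ℝ} (hcov : covM μ X Y = P * covM μ Y Y) (i : ι) :
    ∃ c : ℝ, μ[fun ω => X ω i | MeasurableSpace.comap Y inferInstance]
      =ᵐ[μ] fun ω => P.mulVec (Y ω) i + c := by
  have := Fintype.ofFinite ι
  have := h.isProbabilityMeasure
  have hX : Integrable (fun ω => X ω i) μ :=
    (memLp_two_apply_of_hasGaussianLaw h.fst i).integrable one_le_two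
  have hPY : Integrable (fun ω => P.mulVec (Y ω) i) μ :=
    (memLp_mulVec_apply (memLp_two_apply_of_hasGaussianLaw h.snd) P i).integrable one_le_two
  have hind : IndepFun (fun ω => X ω i - P.mulVec (Y ω) i) Y μ :=
    (indepFun_sub_mulVec_of_hasGaussianLaw h hcov).comp (measurable_pi_apply i) measurable_id
  exact ⟨_, condExp_comap_ae_eq_of_indepFun_sub (g := fun y => P.mulVec y i) (by fun_prop) hYm
    (by fun_prop) hX hPY hind⟩

end Gaussian

theorem gaussian_condIndep_cov_propagates_general {Ω ι κ τ : Type*} [MeasurableSpace Ω]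
    [StandardBorelSpace Ω] {μ : Measure Ω} [IsProbabilityMeasure μ] [Finite ι] [Fintype κ]
    {X : Ω → ι → ℝ} {Y : Ω → κ → ℝ} {Z : Ω → τ → ℝ}
    (hXm : Measurable X) (hYm : Measurable Y) (hZm : Measurable Z)
    (hXY : HasGaussianLaw (fun ω => (X ω, Y ω)) μ) (hZ : ∀ j, MemLp (fun ω => Z ω j) 2 μ)
    (hCI : CondIndepFun (MeasurableSpace.comap Y inferInstance) hYm.comap_le X Z μ)
    {P : Matrix ι κ ℝ} (hcov : covM μ X Y = P * covM μ Y Y) :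
    covM μ X Z = P * covM μ Y Z := by
  have := Fintype.ofFinite ι
  have hX i : MemLp (fun ω => X ω i) 2 μ := memLp_two_apply_of_hasGaussianLaw hXY.fst i
  have hY k : MemLp (fun ω => Y ω k) 2 μ := memLp_two_apply_of_hasGaussianLaw hXY.snd k
  have hPY := memLp_mulVec_apply hY P
  rw [← covM_mulVec_left hY hZ]
  ext i j
  obtain ⟨c, hc⟩ := exists_condExp_ae_eq_mulVec_add_const_of_hasGaussianLaw hXY hXm hYm hcov i
  calc covM μ X Z i j
    _ = cov[fun ω => X ω i, fun ω => Z ω j; μ] := covM_apply_eq_covariance (hX i) (hZ j)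
    _ = cov[fun ω => P.mulVec (Y ω) i + c, fun ω => Z ω j; μ] :=
      covariance_eq_of_condIndepFun_of_condExp_ae_eq
        (hCI.comp (measurable_pi_apply i) (measurable_pi_apply j))
        (by fun_prop) (by fun_prop) (hX i) (hZ j) hc
    _ = cov[fun ω => P.mulVec (Y ω) i, fun ω => Z ω j; μ] :=
      covariance_add_const_left ((hPY i).integrable one_le_two) c
    _ = covM μ (fun ω => P.mulVec (Y ω)) Z i j :=
      (covM_apply_eq_covariance (hPY i) (hZ j)).symm

/-- For jointly Gaussian mean-zero random vectors `Y₀, Y₁, Y₂` with `Cov(Y₁)`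
invertible, if `Y₂` is conditionally independent of `Y₀` given `Y₁` and
`Cov(Y₂,Y₁) = P · Cov(Y₁,Y₁)`, then `Cov(Y₂,Y₀) = P · Cov(Y₁,Y₀)`. -/
theorem gaussian_condIndep_cov_propagates
    {Ω : Type*} [MeasurableSpace Ω] [StandardBorelSpace Ω]
    (Pr : Measure Ω) [IsProbabilityMeasure Pr]
    {d p : ℕ}
    (Y0 : Ω → Fin p → ℝ) (Y1 Y2 : Ω → Fin d → ℝ)
    (hY0 : Measurable Y0) (hY1 : Measurable Y1) (hY2 : Measurable Y2)
    (hGauss : IsGaussianVec Pr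
      (fun ω => Sum.elim (Sum.elim (Y0 ω) (Y1 ω)) (Y2 ω)))
    (hm0 : ∀ i, ∫ ω, Y0 ω i ∂Pr = 0)
    (hm1 : ∀ i, ∫ ω, Y1 ω i ∂Pr = 0)
    (hm2 : ∀ i, ∫ ω, Y2 ω i ∂Pr = 0)
    (hY1inv : IsUnit (covM Pr Y1 Y1))
    (P : Matrix (Fin d) (Fin d) ℝ)
    (hCI : CondIndepFun (MeasurableSpace.comap Y1 inferInstance) hY1.comap_le Y2 Y0 Pr)
    (hcov : covM Pr Y2 Y1 = P * covM Pr Y1 Y1) :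
    covM Pr Y2 Y0 = P * covM Pr Y1 Y0 :=
  gaussian_condIndep_cov_propagates_general hY2 hY1 hY0
    (hasGaussianLaw_prodMk_comp hGauss.hasGaussianLaw Sum.inr (Sum.inl ∘ Sum.inr))
    (fun j => memLp_two_apply_of_hasGaussianLaw hGauss.hasGaussianLaw (Sum.inl (Sum.inl j)))
    hCI hcov
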